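/- Let A ∈ ℝ^{n×n} be symmetric and strictly k-positive, where 1 ≤ k ≤ n, with eigenvalues λ₁, …, λ_n ordered so that |λ₁| ≥ |λ₂| ≥ … ≥ |λ_n|. Then for every 1 ≤ j ≤ k, any eigenvector u_j of A corresponding to λ_j has exactly j−1 sign changes, i.e. S⁻(u_j) = S⁺(u_j) = j−1. -/

import Mathlib

open Matrix Polynomial

/-- Number of sign changes between consecutive entries of a list of reals. -/
noncomputable def signChanges : List ℝ → ℕ
  | [] => 0
  | [_] => 0
  | a :: b :: l => (if a * b < 0 then 1 else 0) + signChanges (b :: l)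

/-- `S⁻(x)`: the number of sign changes in the sequence obtained from `x`
by deleting its zero entries. -/
noncomputable def Sminus {n : ℕ} (x : Fin n → ℝ) : ℕ :=
  signChanges ((List.ofFn x).filter (· ≠ 0))

/-- `S⁺(x)`: the maximal number of sign changes obtainable after replacing
each zero entry of `x` by an arbitrary nonzero value. -/
noncomputable def Splus {n : ℕ} (x : Fin n → ℝ) : ℕ :=
  sSup {m : ℕ | ∃ y : Fin n → ℝ, (∀ i, y i ≠ 0) ∧ (∀ i, x i ≠ 0 → y i = x i) ∧
    signChanges (List.ofFn y) = m}

/-- A matrix is strictly `k`-positive if all its minors of order at most `k`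
(taken with strictly increasing row and column indices) are positive. -/
def IsStrictlyKPositive {m n : ℕ} (X : Matrix (Fin m) (Fin n) ℝ) (k : ℕ) : Prop :=
  ∀ p : ℕ, 1 ≤ p → p ≤ k → ∀ r : Fin p → Fin m, ∀ c : Fin p → Fin n,
    StrictMono r → StrictMono c → 0 < (X.submatrix r c).det

/-- **Cauchy–Binet**: the determinant of a product of a `p × n` and an `n × p` matrix. -/
theorem det_mul_eq_sum_orderEmbedding {R : Type*} [CommRing R] {p n : ℕ}
    (M : Matrix (Fin p) (Fin n) R) (N : Matrix (Fin n) (Fin p) R) :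
    (M * N).det = ∑ I : Fin p ↪o Fin n, (M.submatrix id I).det * (N.submatrix I id).det := by
  classical
  have hexp : (M * N).det = ∑ f : Fin p → Fin n, (∏ i, M i (f i)) * (N.submatrix f id).det := by
    have hrow : (M * N) = fun i => ∑ j, M i j • N j := by
      ext i j
      simp [mul_apply, Finset.sum_apply]
    change detRowAlternating (M * N) = _
    rw [hrow]
    refine (MultilinearMap.map_sum (detRowAlternating (R := R) (n := Fin p)).toMultilinearMap
      (fun i j => M i j • N j)).trans (Finset.sum_congr rfl fun f _ => ?_)
    exact (MultilinearMap.map_smul_univ _ (fun i => M i (f i)) (fun i => N (f i))).trans rfl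
  have hinj : ∑ f : Fin p → Fin n, (∏ i, M i (f i)) * (N.submatrix f id).det
      = ∑ f : Fin p → Fin n with Function.Injective f,
        (∏ i, M i (f i)) * (N.submatrix f id).det := by
    refine (Finset.sum_subset (Finset.filter_subset _ _) fun f _ hf => ?_).symm
    obtain ⟨a, b, hab, hne⟩ := Function.not_injective_iff.mp
      (show ¬ Function.Injective f by simpa using hf)
    rw [det_zero_of_row_eq hne (by ext; simp [hab]), mul_zero]
  have hbij : ∑ x : (Fin p ↪o Fin n) × Equiv.Perm (Fin p),
        (∏ i, M i (x.1 (x.2 i))) * (N.submatrix (x.1 ∘ x.2) id).det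
      = ∑ f : Fin p → Fin n with Function.Injective f,
        (∏ i, M i (f i)) * (N.submatrix f id).det := by
    refine Finset.sum_bij (fun x _ => x.1 ∘ x.2) ?_ ?_ ?_ ?_
    · intro x _
      simpa using x.1.injective.comp x.2.injective
    · rintro ⟨I, σ⟩ _ ⟨J, τ⟩ _ h
      have hr := congrArg Set.range h
      simp only [EquivLike.range_comp] at hr
      obtain rfl := OrderEmbedding.range_inj.mp hr
      have : σ = τ := Equiv.ext fun i => I.injective (congrFun h i)
      rw [this]
    · intro f hf
      have hf' : Function.Injective f := by simpa using hf
      refine ⟨(OrderEmbedding.ofStrictMono (f ∘ Tuple.sort f)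
        ((Tuple.monotone_sort f).strictMono_of_injective
          (hf'.comp (Tuple.sort f).injective)), (Tuple.sort f)⁻¹), Finset.mem_univ _, ?_⟩
      ext i
      simp
    · intro x _
      rfl
  rw [hexp, hinj, ← hbij, Fintype.sum_prod_type]
  refine Finset.sum_congr rfl fun I _ => ?_
  rw [← det_transpose, det_apply', Finset.sum_mul]
  refine Finset.sum_congr rfl fun σ _ => ?_
  have : (N.submatrix (I ∘ σ) id).det = Equiv.Perm.sign σ * (N.submatrix I id).det := by
    rw [← det_permute]
    rfl
  rw [this]
  simp only [transpose_apply, submatrix_apply, id]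
  ring

/-- The `p`-th compound matrix: the matrix of all minors of order `p`. -/
noncomputable def compoundMatrix {R : Type*} [CommRing R] {m n : ℕ} (p : ℕ)
    (A : Matrix (Fin m) (Fin n) R) : Matrix (Fin p ↪o Fin m) (Fin p ↪o Fin n) R :=
  of fun I J => (A.submatrix I J).det

theorem compoundMatrix_mul {R : Type*} [CommRing R] {l m n : ℕ} (p : ℕ)
    (A : Matrix (Fin l) (Fin m) R) (B : Matrix (Fin m) (Fin n) R) :
    compoundMatrix p (A * B) = compoundMatrix p A * compoundMatrix p B := by
  ext I J
  simp only [compoundMatrix, of_apply, mul_apply]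
  rw [← submatrix_mul_equiv A B I (Equiv.refl (Fin m)) J, det_mul_eq_sum_orderEmbedding]
  rfl

theorem compoundMatrix_transpose {R : Type*} [CommRing R] {m n : ℕ} (p : ℕ)
    (A : Matrix (Fin m) (Fin n) R) : compoundMatrix p Aᵀ = (compoundMatrix p A)ᵀ := by
  ext I J
  simp only [compoundMatrix, of_apply, transpose_apply]
  rw [← det_transpose]
  rfl

theorem compoundMatrix_diagonal {R : Type*} [CommRing R] {n : ℕ} (p : ℕ) (d : Fin n → R) :
    compoundMatrix p (diagonal d) = diagonal fun I : Fin p ↪o Fin n => ∏ s, d (I s) := by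
  classical
  ext I J
  by_cases h : I = J
  · subst h
    simp only [compoundMatrix, of_apply, diagonal_apply_eq]
    rw [submatrix_diagonal d I I.injective, det_diagonal]
    rfl
  · rw [diagonal_apply_ne _ h]
    simp only [compoundMatrix, of_apply]
    obtain ⟨s, hs⟩ : ∃ s, I s ∉ Set.range J := by
      by_contra! hc
      apply h
      choose g hg using hc
      have hginj : Function.Injective g := fun a b hab => I.injective (by rw [← hg a, ← hg b, hab])
      have hgsurj := Finite.surjective_of_injective hginj
      refine OrderEmbedding.range_inj.mp (Set.Subset.antisymm ?_ ?_)
      · rintro _ ⟨a, rfl⟩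
        exact ⟨g a, hg a⟩
      · rintro _ ⟨b, rfl⟩
        obtain ⟨a, rfl⟩ := hgsurj b
        exact ⟨a, (hg a).symm⟩
    refine det_eq_zero_of_row_eq_zero s fun t => ?_
    exact diagonal_apply_ne _ fun h' => hs ⟨t, h'.symm⟩

theorem compoundMatrix_one {R : Type*} [CommRing R] {n : ℕ} (p : ℕ) :
    compoundMatrix p (1 : Matrix (Fin n) (Fin n) R) = 1 := by
  rw [← diagonal_one, compoundMatrix_diagonal]
  simp

/-- Perron-type statement: if a symmetric matrix with positive entries is diagonalized by an
orthogonal matrix, then the eigenvector of an eigenvalue of maximal modulus has entries of one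
strict sign. -/
theorem exists_sign_of_orthogonal_diagonalization {ι : Type*} [Fintype ι] [DecidableEq ι]
    {B Q : Matrix ι ι ℝ} {d : ι → ℝ} (hpos : ∀ i j, 0 < B i j) (hQ : Qᵀ * Q = 1)
    (hB : B = Q * diagonal d * Qᵀ) {s : ι} (hs : ∀ t, |d t| ≤ |d s|) :
    ∃ ε : ℝ, ε ≠ 0 ∧ ∀ i, 0 < ε * Q i s := by
  have hQ' : Q * Qᵀ = 1 := mul_eq_one_comm.mp hQ
  set w : ι → ℝ := fun i => Q i s with hw
  have hww : ∑ i, w i * w i = 1 := by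
    have := congrFun (congrFun hQ s) s
    simpa [mul_apply] using this
  have hBw : ∀ i, ∑ j, B i j * w j = d s * w i := by
    intro i
    have h : B * Q = Q * diagonal d := by rw [hB, Matrix.mul_assoc, hQ, Matrix.mul_one]
    have := congrFun (congrFun h i) s
    rw [mul_diagonal] at this
    rw [mul_comm, ← this, mul_apply]
  have hquad : ∑ i, ∑ j, w i * B i j * w j = d s := by
    calc _ = ∑ i, d s * (w i * w i) := by
          refine Finset.sum_congr rfl fun i _ => ?_
          simp_rw [mul_assoc, ← Finset.mul_sum, hBw]
          ring
      _ = d s := by rw [← Finset.mul_sum, hww, mul_one]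
  have habs : ∑ i, ∑ j, |w i * B i j * w j| ≤ |d s| := by
    set v : ι → ℝ := fun i => |w i| with hv
    have h1 : ∑ i, ∑ j, |w i * B i j * w j| = v ⬝ᵥ (B *ᵥ v) := by
      simp only [dotProduct, mulVec, Finset.mul_sum, hv]
      refine Finset.sum_congr rfl fun i _ => Finset.sum_congr rfl fun j _ => ?_
      rw [abs_mul, abs_mul, abs_of_pos (hpos i j), mul_assoc]
    have h2 : v ⬝ᵥ (B *ᵥ v) = ∑ t, d t * ((Qᵀ *ᵥ v) t * (Qᵀ *ᵥ v) t) := by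
      rw [hB, ← mulVec_mulVec, ← mulVec_mulVec, dotProduct_mulVec, ← mulVec_transpose]
      simp only [dotProduct, mulVec_diagonal]
      exact Finset.sum_congr rfl fun t _ => by ring
    have h3 : ∑ t, (Qᵀ *ᵥ v) t * (Qᵀ *ᵥ v) t = 1 := by
      have : (Qᵀ *ᵥ v) ⬝ᵥ (Qᵀ *ᵥ v) = v ⬝ᵥ v := by
        rw [dotProduct_mulVec, vecMul_transpose, mulVec_mulVec, hQ', one_mulVec]
      rw [← hww]
      simpa [dotProduct, hv, abs_mul_abs_self] using this
    rw [h1, h2]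
    calc _ ≤ ∑ t, |d s| * ((Qᵀ *ᵥ v) t * (Qᵀ *ᵥ v) t) :=
          Finset.sum_le_sum fun t _ => mul_le_mul_of_nonneg_right
            ((le_abs_self _).trans (hs t)) (mul_self_nonneg _)
      _ = |d s| := by rw [← Finset.mul_sum, h3, mul_one]
  obtain ⟨i₀, hi₀⟩ : ∃ i, w i ≠ 0 := by
    by_contra! hc
    simp [hc] at hww
  have hdiag : 0 < w i₀ * B i₀ i₀ * w i₀ := by
    have := mul_pos (hpos i₀ i₀) (mul_self_pos.mpr hi₀)
    linarith [mul_comm (w i₀) (B i₀ i₀), mul_assoc (B i₀ i₀) (w i₀) (w i₀)]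
  have hd : 0 ≤ d s := by
    by_contra! hneg
    have hz : ∑ i, ∑ j, (w i * B i j * w j + |w i * B i j * w j|) ≤ 0 := by
      simp_rw [Finset.sum_add_distrib]
      rw [hquad]
      rw [abs_of_neg hneg] at habs
      linarith
    have hge : ∀ i j, 0 ≤ w i * B i j * w j + |w i * B i j * w j| := fun i j => by
      linarith [neg_abs_le (w i * B i j * w j)]
    have hle : w i₀ * B i₀ i₀ * w i₀ + |w i₀ * B i₀ i₀ * w i₀| ≤ 0 :=
      ((Finset.single_le_sum (fun j _ => hge i₀ j) (Finset.mem_univ i₀)).trans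
        (Finset.single_le_sum (f := fun i => ∑ j, (w i * B i j * w j + |w i * B i j * w j|))
          (fun i _ => Finset.sum_nonneg fun j _ => hge i j) (Finset.mem_univ i₀))).trans hz
    linarith [abs_nonneg (w i₀ * B i₀ i₀ * w i₀)]
  have hnn : ∀ i j, 0 ≤ w i * B i j * w j := by
    have hz : ∑ i, ∑ j, (|w i * B i j * w j| - w i * B i j * w j) ≤ 0 := by
      simp_rw [Finset.sum_sub_distrib]
      rw [hquad]
      rw [abs_of_nonneg hd] at habs
      linarith
    have hge : ∀ i j, 0 ≤ |w i * B i j * w j| - w i * B i j * w j := fun i j => by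
      linarith [le_abs_self (w i * B i j * w j)]
    intro i j
    have hle : |w i * B i j * w j| - w i * B i j * w j ≤ 0 :=
      ((Finset.single_le_sum (fun j _ => hge i j) (Finset.mem_univ j)).trans
        (Finset.single_le_sum (f := fun i => ∑ j, (|w i * B i j * w j| - w i * B i j * w j))
          (fun i _ => Finset.sum_nonneg fun j _ => hge i j) (Finset.mem_univ i))).trans hz
    linarith [abs_nonneg (w i * B i j * w j)]
  refine ⟨w i₀, hi₀, fun i => ?_⟩
  have hsum : 0 < ∑ j, B i j * (w i₀ * w j) := by
    refine Finset.sum_pos' (fun j _ => mul_nonneg (hpos i j).le ?_)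
      ⟨i₀, Finset.mem_univ _, mul_pos (hpos _ _) (mul_self_pos.mpr hi₀)⟩
    have := hnn i₀ j
    rw [mul_right_comm] at this
    exact nonneg_of_mul_nonneg_left this (hpos i₀ j)
  have heq : ∑ j, B i j * (w i₀ * w j) = d s * (w i₀ * w i) := by
    calc _ = w i₀ * ∑ j, B i j * w j := by
          rw [Finset.mul_sum]
          exact Finset.sum_congr rfl fun j _ => by ring
      _ = _ := by rw [hBw]; ring
  rw [heq] at hsum
  exact pos_of_mul_pos_right hsum hd

theorem signChanges_cons_le {c b : ℝ} (hb : b ≠ 0) (l : List ℝ) :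
    signChanges (c :: l) ≤ signChanges (c :: b :: l) := by
  cases l with
  | nil => simp [signChanges]
  | cons d l =>
    simp only [signChanges]
    have : c * d < 0 → ¬ c * b < 0 → b * d < 0 := by
      intro h1 h2
      have h3 : 0 < b * b := mul_self_pos.mpr hb
      by_contra h4
      nlinarith [mul_nonneg (not_lt.mp h2) (not_lt.mp h4), mul_neg_of_neg_of_pos h1 h3]
    split_ifs <;> first | omega | (exfalso; tauto)

theorem signChanges_cons_filter_le (c : ℝ) (l : List ℝ) :
    signChanges (c :: l.filter (· ≠ 0)) ≤
      signChanges (c :: l.map fun x => if x = 0 then 1 else x) := by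
  induction l generalizing c with
  | nil => simp
  | cons a l ih =>
    by_cases ha : a = 0
    · simpa [ha] using (ih c).trans (signChanges_cons_le one_ne_zero _)
    · simpa [ha, signChanges] using ih a

theorem signChanges_le_cons (a : ℝ) (l : List ℝ) : signChanges l ≤ signChanges (a :: l) := by
  cases l <;> simp [signChanges]

theorem signChanges_filter_le (l : List ℝ) :
    signChanges (l.filter (· ≠ 0)) ≤ signChanges (l.map fun x => if x = 0 then 1 else x) := by
  induction l with
  | nil => simp
  | cons a l ih =>
    by_cases ha : a = 0
    · simpa [ha] using ih.trans (signChanges_le_cons 1 _)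
    · simpa [ha] using signChanges_cons_filter_le a l

theorem signChanges_le_length (l : List ℝ) : signChanges l ≤ l.length := by
  induction l with
  | nil => simp [signChanges]
  | cons a l ih =>
    cases l with
    | nil => simp [signChanges]
    | cons b l =>
      simp only [signChanges, List.length_cons] at ih ⊢
      split_ifs <;> omega

theorem bddAbove_signChanges_completions {n : ℕ} (x : Fin n → ℝ) :
    BddAbove {m : ℕ | ∃ y : Fin n → ℝ, (∀ i, y i ≠ 0) ∧ (∀ i, x i ≠ 0 → y i = x i) ∧
      signChanges (List.ofFn y) = m} := by
  refine ⟨n, ?_⟩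
  rintro m ⟨y, -, -, rfl⟩
  simpa using signChanges_le_length (List.ofFn y)

theorem completion_mem {n : ℕ} (x : Fin n → ℝ) :
    signChanges ((List.ofFn x).map fun a => if a = 0 then 1 else a) ∈
    {m : ℕ | ∃ y : Fin n → ℝ, (∀ i, y i ≠ 0) ∧ (∀ i, x i ≠ 0 → y i = x i) ∧
      signChanges (List.ofFn y) = m} := by
  refine ⟨fun i => if x i = 0 then 1 else x i, fun i => ?_, fun i hi => by simp [hi], ?_⟩
  · dsimp only
    split_ifs with h
    exacts [one_ne_zero, h]
  · rw [List.map_ofFn]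
    rfl

theorem Sminus_le_Splus {n : ℕ} (x : Fin n → ℝ) : Sminus x ≤ Splus x :=
  (signChanges_filter_le _).trans (le_csSup (bddAbove_signChanges_completions x)
    (completion_mem x))

/-- A list of nonzero reals has an alternating sublist with one more entry than it has sign
changes. -/
theorem exists_alternating_sublist (a : ℝ) (l : List ℝ) (hl : ∀ x ∈ a :: l, x ≠ 0) :
    ∃ l', (a :: l').Sublist (a :: l) ∧ l'.length = signChanges (a :: l) ∧
      (a :: l').IsChain (fun x y => x * y < 0) := by
  induction l generalizing a with
  | nil => exact ⟨[], by simp [signChanges]⟩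
  | cons b l ih =>
    obtain ⟨l', hsub, hlen, hch⟩ := ih b fun x hx => hl x (List.mem_cons_of_mem _ hx)
    by_cases hab : a * b < 0
    · exact ⟨b :: l', hsub.cons_cons a, by simp [signChanges, hab, hlen, add_comm],
        List.isChain_cons_cons.mpr ⟨hab, hch⟩⟩
    · refine ⟨l', ((List.cons_sublist_cons.mp hsub).cons b).cons_cons a,
        by simp [signChanges, hab, hlen], ?_⟩
      have ha : a ≠ 0 := hl a (by simp)
      have hb : b ≠ 0 := hl b (by simp)
      cases l' with
      | nil => simp
      | cons c l' =>
        rw [List.isChain_cons_cons] at hch ⊢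
        refine ⟨?_, hch.2⟩
        have h2 : 0 < a * b := lt_of_le_of_ne (not_lt.mp hab) (mul_ne_zero ha hb).symm
        by_contra h4
        nlinarith [mul_nonneg h2.le (not_lt.mp h4), hch.1, mul_self_pos.mpr ha,
          mul_neg_of_pos_of_neg (mul_self_pos.mpr ha) hch.1]

/-- A nowhere zero vector with `m` sign changes alternates strictly along some `m + 1` indices. -/
theorem exists_alternating_indices {n : ℕ} [NeZero n] (y : Fin n → ℝ) (hy : ∀ i, y i ≠ 0) :
    ∃ (f : Fin (signChanges (List.ofFn y) + 1) ↪o Fin n) (ε : ℝ), ε ≠ 0 ∧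
      ∀ s : Fin (signChanges (List.ofFn y) + 1), 0 < ε * (-1) ^ (s : ℕ) * y (f s) := by
  obtain ⟨a, l, hal⟩ : ∃ a l, List.ofFn y = a :: l := by
    obtain ⟨m, rfl⟩ := Nat.exists_eq_succ_of_ne_zero (NeZero.ne n)
    exact ⟨_, _, List.ofFn_succ⟩
  have hnz : ∀ x ∈ a :: l, x ≠ 0 := by
    rw [← hal]
    intro x hx
    obtain ⟨i, rfl⟩ := (List.mem_ofFn' y x).mp hx
    exact hy i
  obtain ⟨l', hsub, hlen, hch⟩ := exists_alternating_sublist a l hnz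
  rw [← hal] at hsub hlen
  obtain ⟨f, hf⟩ := List.sublist_iff_exists_fin_orderEmbedding_get_eq.mp hsub
  have hln : (a :: l').length = signChanges (List.ofFn y) + 1 := by simp [hlen]
  have hget : ∀ (s : ℕ) (hs : s < (a :: l').length), 0 < a * (-1) ^ s * (a :: l')[s] := by
    intro s
    induction s with
    | zero => intro hs; simpa using mul_self_pos.mpr (hnz a (by simp))
    | succ s ih =>
      intro hs
      have h1 := ih (by omega)
      have h2 := List.isChain_iff_getElem.mp hch s hs
      by_contra h3
      have h4 := mul_nonneg (mul_self_nonneg ((a :: l')[s])) (not_lt.mp h3 |> neg_nonneg.mpr)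
      have h5 := mul_neg_of_pos_of_neg h1 h2
      rw [pow_succ] at h4
      linarith
  refine ⟨((Fin.castOrderIso hln.symm).toOrderEmbedding.trans f).trans
    (Fin.castOrderIso (List.length_ofFn (f := y))).toOrderEmbedding, a, hnz a (by simp), ?_⟩
  intro s
  have h := hget s (by omega)
  have h2 := hf (Fin.cast hln.symm s)
  simp only [List.get_eq_getElem, List.getElem_ofFn] at h2
  convert h using 2
  exact h2.symm

theorem card_filter_map_succ {n : ℕ} (T : Finset (Fin n)) (i : Fin n) :
    ((T.map (Fin.succEmb n)).filter (· < i.succ)).card = (T.filter (· < i)).card := by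
  rw [Finset.filter_map, Finset.card_map]
  congr 1
  ext j
  rw [Finset.mem_filter, Finset.mem_filter]
  simp

/-- Indices separating the sign blocks of the vector `x` preceded by a nonzero entry `c`. -/
theorem exists_block_separators_cons {n : ℕ} (x : Fin n → ℝ) (c : ℝ) (hc : c ≠ 0) :
    ∃ T : Finset (Fin n), T.card = signChanges (c :: (List.ofFn x).filter (· ≠ 0)) ∧
      ∀ i, i ∉ T → 0 ≤ c * (-1) ^ (T.filter (· < i)).card * x i := by
  induction n generalizing c with
  | zero => exact ⟨∅, by simp [signChanges], fun i => i.elim0⟩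
  | succ n ih =>
    by_cases hx0 : x 0 = 0
    · obtain ⟨T, hT, hTs⟩ := ih (fun i => x i.succ) c hc
      refine ⟨T.map (Fin.succEmb n), ?_, fun i hi => ?_⟩
      · rw [Finset.card_map, hT]
        simp [List.ofFn_succ, hx0]
      · obtain rfl | ⟨i, rfl⟩ := Fin.eq_zero_or_eq_succ i
        · simp [hx0]
        · rw [card_filter_map_succ]
          exact hTs i (by simpa using hi)
    obtain ⟨T, hT, hTs⟩ := ih (fun i => x i.succ) (x 0) hx0
    by_cases hx : c * x 0 < 0
    · have hnot : (0 : Fin (n + 1)) ∉ T.map (Fin.succEmb n) := by simp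
      refine ⟨insert 0 (T.map (Fin.succEmb n)), ?_, fun i hi => ?_⟩
      · rw [Finset.card_insert_of_notMem hnot, Finset.card_map, hT]
        simp [List.ofFn_succ, hx0, signChanges, hx, add_comm]
      · obtain rfl | ⟨i, rfl⟩ := Fin.eq_zero_or_eq_succ i
        · simp at hi
        · have h := hTs i (by simpa using hi)
          rw [Finset.filter_insert, if_pos (Fin.succ_pos i), Finset.card_insert_of_notMem
            (by simp), card_filter_map_succ, pow_succ]
          refine nonneg_of_mul_nonneg_left ?_ (mul_self_pos.mpr hx0)
          calc 0 ≤ -(c * x 0) * (x 0 * (-1) ^ (T.filter (· < i)).card * x i.succ) :=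
                mul_nonneg (neg_pos.mpr hx).le h
            _ = _ := by ring
    · refine ⟨T.map (Fin.succEmb n), ?_, fun i hi => ?_⟩
      · rw [Finset.card_map, hT]
        simp [List.ofFn_succ, hx0, signChanges, hx]
      · obtain rfl | ⟨i, rfl⟩ := Fin.eq_zero_or_eq_succ i
        · simpa [Finset.filter_map] using not_lt.mp hx
        · have h := hTs i (by simpa using hi)
          rw [card_filter_map_succ]
          refine nonneg_of_mul_nonneg_left ?_ (mul_self_pos.mpr hx0)
          calc 0 ≤ (c * x 0) * (x 0 * (-1) ^ (T.filter (· < i)).card * x i.succ) :=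
                mul_nonneg (not_lt.mp hx) h
            _ = _ := by ring

/-- A nonzero vector with `q` sign changes is divided by `q` indices into blocks of alternating
weak sign, and it does not vanish identically off these indices. -/
theorem exists_block_separators {n : ℕ} (x : Fin n → ℝ) (hx : x ≠ 0) :
    ∃ (T : Finset (Fin n)) (c : ℝ), c ≠ 0 ∧ T.card = Sminus x ∧
      (∀ i, i ∉ T → 0 ≤ c * (-1) ^ (T.filter (· < i)).card * x i) ∧ ∃ i, i ∉ T ∧ x i ≠ 0 := by
  induction n with
  | zero => exact absurd (Subsingleton.elim _ _) hx
  | succ n ih =>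
    by_cases hx0 : x 0 = 0
    · have hne : (fun i => x (Fin.succ i)) ≠ 0 := fun h =>
        hx (funext fun i => Fin.cases hx0 (fun i => congrFun h i) i)
      obtain ⟨T, c, hc, hT, hTs, i, hi, hxi⟩ := ih (fun i => x i.succ) hne
      refine ⟨T.map (Fin.succEmb n), c, hc, ?_, fun i hi => ?_, i.succ, by simpa using hi, hxi⟩
      · rw [Finset.card_map, hT]
        simp [Sminus, List.ofFn_succ, hx0]
      · obtain rfl | ⟨i, rfl⟩ := Fin.eq_zero_or_eq_succ i
        · simp [hx0]
        · rw [card_filter_map_succ]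
          exact hTs i (by simpa using hi)
    · obtain ⟨T, hT, hTs⟩ := exists_block_separators_cons (fun i => x i.succ) (x 0) hx0
      refine ⟨T.map (Fin.succEmb n), x 0, hx0, ?_, fun i hi => ?_, 0, by simp, hx0⟩
      · rw [Finset.card_map, hT]
        simp [Sminus, List.ofFn_succ, hx0]
      · obtain rfl | ⟨i, rfl⟩ := Fin.eq_zero_or_eq_succ i
        · simpa [Finset.filter_map] using mul_self_nonneg (x 0)
        · rw [card_filter_map_succ]
          exact hTs i (by simpa using hi)

/-- If all maximal minors of `V` have the same strict sign, a nonzero vector in the column space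
of `V` does not alternate weakly along more indices than `V` has columns. -/
theorem not_alternating_of_minors {n p : ℕ} {V : Matrix (Fin n) (Fin p) ℝ} {ε : ℝ}
    (hV : ∀ I : Fin p ↪o Fin n, 0 < ε * (V.submatrix I id).det) {c : Fin p → ℝ}
    (hx : V *ᵥ c ≠ 0) (f : Fin (p + 1) ↪o Fin n) {δ : ℝ} (hδ : δ ≠ 0) :
    ¬ ∀ s : Fin (p + 1), 0 ≤ δ * (-1) ^ (s : ℕ) * (V *ᵥ c) (f s) := by
  intro hs
  set x := V *ᵥ c with hxdef
  let M : Matrix (Fin (p + 1)) (Fin (p + 1)) ℝ := of fun s => Fin.cons (x (f s)) (V (f s))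
  have hdet : M.det = 0 := by
    refine exists_mulVec_eq_zero_iff.mp ⟨Fin.cons (-1) c, fun h => ?_, ?_⟩
    · simpa using congrFun h 0
    · ext s
      simp [M, mulVec, dotProduct, Fin.sum_univ_succ, hxdef]
  let W : Fin (p + 1) → Fin p ↪o Fin n := fun s => (Fin.succAboveOrderEmb s).trans f
  have hsum : ∑ s : Fin (p + 1), (δ * (-1) ^ (s : ℕ) * x (f s)) *
      (ε * (V.submatrix (W s) id).det) = 0 := by
    have h := det_succ_column_zero M
    rw [hdet] at h
    calc _ = (δ * ε) * ∑ s : Fin (p + 1), (-1) ^ (s : ℕ) * M s 0 *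
          (M.submatrix s.succAbove Fin.succ).det := by
          rw [Finset.mul_sum]
          refine Finset.sum_congr rfl fun s _ => ?_
          have : M.submatrix s.succAbove Fin.succ = V.submatrix (W s) id := by
            ext a b
            simp [M, W]
          rw [this]
          simp only [M, of_apply, Fin.cons_zero]
          ring
      _ = 0 := by rw [← h, mul_zero]
  have hzero : ∀ s, x (f s) = 0 := by
    intro s
    have h := (Finset.sum_eq_zero_iff_of_nonneg fun s _ => mul_nonneg (hs s) (hV (W s)).le).mp
      hsum s (Finset.mem_univ s)
    have h2 := (mul_eq_zero.mp h).resolve_right (hV (W s)).ne'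
    exact (mul_eq_zero.mp h2).resolve_left (mul_ne_zero hδ (pow_ne_zero _ (by norm_num)))
  have hc : c = 0 := by
    by_contra hc
    have h0 : (V.submatrix (W 0) id).det = 0 := by
      refine exists_mulVec_eq_zero_iff.mp ⟨c, hc, ?_⟩
      ext a
      exact hzero _
    have := hV (W 0)
    simp [h0] at this
  exact hx (by rw [hxdef, hc, mulVec_zero])

theorem Splus_le_of_minors {n q : ℕ} [NeZero n] {V : Matrix (Fin n) (Fin (q + 1)) ℝ} {ε : ℝ}
    (hV : ∀ I : Fin (q + 1) ↪o Fin n, 0 < ε * (V.submatrix I id).det) {c : Fin (q + 1) → ℝ}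
    (hx : V *ᵥ c ≠ 0) : Splus (V *ᵥ c) ≤ q := by
  refine csSup_le ⟨_, completion_mem _⟩ ?_
  rintro m ⟨y, hy, hyx, rfl⟩
  by_contra! hlt
  obtain ⟨f, δ, hδ, hf⟩ := exists_alternating_indices y hy
  refine not_alternating_of_minors hV hx
    ((Fin.castLEOrderEmb (by omega : q + 1 + 1 ≤ signChanges (List.ofFn y) + 1)).trans f) hδ
    fun s => ?_
  by_cases h : (V *ᵥ c) (f (Fin.castLE (by omega) s)) = 0
  · simp [h]
  · have := hf (Fin.castLE (by omega) s)
    rw [hyx _ h] at this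
    exact this.le

theorem strictMono_insertNth_card_filter_lt {q n : ℕ} (t : Fin q ↪o Fin n) {i : Fin n}
    (hi : ∀ s, t s ≠ i) {m : Fin (q + 1)}
    (hm : (m : ℕ) = (Finset.univ.filter fun s => t s < i).card) :
    StrictMono (m.insertNth (α := fun _ => Fin n) i t) := by
  have key : ∀ s : Fin q, t s < i ↔ (s : ℕ) < m := by
    intro s
    rw [hm]
    constructor
    · intro h
      have hsub : Finset.Iic s ⊆ Finset.univ.filter fun s => t s < i := fun a ha => by
        simpa using (t.monotone (Finset.mem_Iic.mp ha)).trans_lt h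
      have := Finset.card_le_card hsub
      rw [Fin.card_Iic] at this
      omega
    · intro h
      by_contra hn
      have hsub : (Finset.univ.filter fun s => t s < i) ⊆ Finset.Iio s := fun a ha => by
        rw [Finset.mem_Iio]
        by_contra hsa
        exact hn ((t.monotone (not_lt.mp hsa)).trans_lt (by simpa using ha))
      have := Finset.card_le_card hsub
      rw [Fin.card_Iio] at this
      omega
  refine (Fin.strictMono_insertNth_iff _ _ _).mpr ⟨t.strictMono, fun s hs => ?_, fun s hs => ?_⟩
  · exact (key s).mpr hs
  · exact lt_of_le_of_ne (not_lt.mp fun h => absurd ((key s).mp h) (not_lt.mpr hs)) (hi s).symm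

/-- If all maximal minors of the `n × (q + 1)` matrix `V` have the same strict sign, a nonzero
vector orthogonal to the columns of `V` does not have exactly `q` sign changes. -/
theorem Sminus_ne_of_minors {n q : ℕ} {V : Matrix (Fin n) (Fin (q + 1)) ℝ} {ε : ℝ}
    (hV : ∀ I : Fin (q + 1) ↪o Fin n, 0 < ε * (V.submatrix I id).det) {x : Fin n → ℝ}
    (hx : x ≠ 0) (hxV : x ᵥ* V = 0) : Sminus x ≠ q := by
  intro hq
  obtain ⟨T, c, hc, hT, hTs, i₀, hi₀, hxi₀⟩ := exists_block_separators x hx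
  rw [hq] at hT
  set t := T.orderEmbOfFin hT with ht
  have htT : ∀ s, t s ∈ T := fun s => T.orderEmbOfFin_mem hT s
  set v : Fin n → ℝ := fun i => (V.submatrix (Fin.cons i t) id).det with hv
  have horth : ∑ i, x i * v i = 0 := by
    have hexp : ∀ i, v i = ∑ s : Fin (q + 1), (-1) ^ (s : ℕ) * V i s *
        (V.submatrix t s.succAbove).det := by
      intro i
      simp only [hv]
      rw [det_succ_row_zero]
      refine Finset.sum_congr rfl fun s _ => ?_
      congr 1
    simp_rw [hexp, Finset.mul_sum]
    rw [Finset.sum_comm]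
    refine Finset.sum_eq_zero fun s _ => ?_
    have h := congrFun hxV s
    simp only [vecMul, dotProduct, Pi.zero_apply] at h
    calc _ = (∑ i, x i * V i s) * ((-1) ^ (s : ℕ) * (V.submatrix t s.succAbove).det) := by
          rw [Finset.sum_mul]
          exact Finset.sum_congr rfl fun i _ => by ring
      _ = 0 := by rw [h, zero_mul]
  have hzero : ∀ i ∈ T, v i = 0 := by
    intro i hi
    obtain ⟨s, hs⟩ : ∃ s, t s = i := by
      have : i ∈ Set.range t := by rw [ht, Finset.range_orderEmbOfFin]; exact hi
      exact this
    refine det_zero_of_row_eq (Fin.succ_ne_zero s).symm ?_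
    ext a
    simp [hs]
  have hsign : ∀ i, i ∉ T → 0 < ε * ((-1) ^ (T.filter (· < i)).card * v i) := by
    intro i hi
    have hcard : (T.filter (· < i)).card = (Finset.univ.filter fun s => t s < i).card := by
      have hTt : T = Finset.univ.map t.toEmbedding := by
        rw [ht, Finset.map_orderEmbOfFin_univ]
      conv_lhs => rw [hTt, Finset.filter_map, Finset.card_map]
      rfl
    have hlt : (Finset.univ.filter fun s => t s < i).card < q + 1 := by
      have := Finset.card_filter_le (Finset.univ : Finset (Fin q)) fun s => t s < i
      simp only [Finset.card_univ, Fintype.card_fin] at this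
      omega
    have hmono := strictMono_insertNth_card_filter_lt t (i := i) (fun s h => hi (h ▸ htT s))
      (m := ⟨_, hlt⟩) rfl
    have h := hV (OrderEmbedding.ofStrictMono _ hmono)
    have hdet : v i = (-1) ^ (Finset.univ.filter fun s => t s < i).card *
        (V.submatrix (OrderEmbedding.ofStrictMono _ hmono) id).det := by
      have h2 := det_permute (Fin.cycleRange ⟨_, hlt⟩).symm
        (V.submatrix (OrderEmbedding.ofStrictMono _ hmono) id)
      rw [Equiv.Perm.sign_symm, Fin.sign_cycleRange] at h2
      push_cast at h2
      rw [← h2, hv]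
      dsimp only
      congr 1
      ext a b
      simp only [submatrix_apply, id, OrderEmbedding.coe_ofStrictMono]
      rw [Fin.insertNth_apply_cycleRange_symm]
    rw [hcard, hdet, ← mul_assoc ((-1 : ℝ) ^ _), ← mul_pow]
    simpa using h
  have hterm : ∀ i, i ∉ T →
      (c * (-1) ^ (T.filter (· < i)).card * x i) * (ε * ((-1) ^ (T.filter (· < i)).card * v i))
        = (c * ε) * (x i * v i) := by
    intro i _
    have : ((-1 : ℝ) ^ (T.filter (· < i)).card) * (-1) ^ (T.filter (· < i)).card = 1 := by
      rw [← mul_pow]; simp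
    linear_combination (c * ε * (x i * v i)) * this
  have hpos : 0 < ∑ i, (c * ε) * (x i * v i) := by
    refine Finset.sum_pos' (fun i _ => ?_) ⟨i₀, Finset.mem_univ _, ?_⟩
    · by_cases hi : i ∈ T
      · simp [hzero i hi]
      · rw [← hterm i hi]
        exact mul_nonneg (hTs i hi) (hsign i hi).le
    · rw [← hterm i₀ hi₀]
      refine mul_pos (lt_of_le_of_ne (hTs i₀ hi₀) (Ne.symm ?_)) (hsign i₀ hi₀)
      exact mul_ne_zero (mul_ne_zero hc (pow_ne_zero _ (by norm_num))) hxi₀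
  rw [← Finset.mul_sum, horth, mul_zero] at hpos
  exact lt_irrefl _ hpos

theorem exists_perm_of_map_univ_eq {ι α : Type*} [Fintype ι] {f g : ι → α}
    (h : Finset.univ.val.map f = Finset.univ.val.map g) : ∃ σ : Equiv.Perm ι, f = g ∘ σ := by
  classical
  have hcard : ∀ v, Fintype.card {i // f i = v} = Fintype.card {i // g i = v} := by
    intro v
    have := congrArg (Multiset.count v) h
    rw [Multiset.count_map, Multiset.count_map] at this
    rw [Fintype.card_subtype, Fintype.card_subtype]
    simp only [eq_comm (a := v)] at this
    exact this
  refine ⟨Equiv.ofFiberEquiv fun v => Fintype.equivOfCardEq (hcard v), ?_⟩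
  ext i
  exact (Equiv.ofFiberEquiv_map _ i).symm

/-- A real symmetric matrix is orthogonally diagonalizable, with the eigenvalues in any
prescribed order. -/
theorem exists_orthogonal_diagonalization {n : ℕ} {A : Matrix (Fin n) (Fin n) ℝ}
    (hsymm : A.IsSymm) {lam : Fin n → ℝ} (hspec : A.charpoly = ∏ i, (X - C (lam i))) :
    ∃ U : Matrix (Fin n) (Fin n) ℝ, Uᵀ * U = 1 ∧ A = U * diagonal lam * Uᵀ := by
  have hH : A.IsHermitian := by rwa [IsHermitian, conjTranspose_eq_transpose_of_trivial]
  obtain ⟨σ, hσ⟩ : ∃ σ : Equiv.Perm (Fin n), lam = hH.eigenvalues ∘ σ := by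
    refine exists_perm_of_map_univ_eq ?_
    have h1 : A.charpoly.roots = Finset.univ.val.map lam := by
      rw [hspec]
      simpa only [Finset.prod, Multiset.map_map, Function.comp_def] using
        roots_multiset_prod_X_sub_C (Finset.univ.val.map lam)
    rw [← h1, hH.roots_charpoly_eq_eigenvalues]
    rfl
  set W : Matrix (Fin n) (Fin n) ℝ := (hH.eigenvectorUnitary).val with hW
  have hWW : Wᵀ * W = 1 := by
    have := Unitary.coe_star_mul_self hH.eigenvectorUnitary
    rwa [star_eq_conjTranspose, conjTranspose_eq_transpose_of_trivial] at this
  have hA : A = W * diagonal hH.eigenvalues * Wᵀ := by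
    have := hH.spectral_theorem
    rwa [Unitary.conjStarAlgAut_apply, star_eq_conjTranspose,
      conjTranspose_eq_transpose_of_trivial] at this
  refine ⟨W.submatrix id σ, ?_, ?_⟩
  · rw [transpose_submatrix, ← submatrix_mul _ _ σ id σ Function.bijective_id, hWW,
      submatrix_one_equiv]
  · have hd : diagonal lam = (diagonal hH.eigenvalues).submatrix σ σ := by
      rw [submatrix_diagonal_equiv, hσ]
    rw [hd, transpose_submatrix, submatrix_mul_equiv, submatrix_mul_equiv, ← hA, submatrix_id_id]

theorem Fin.val_le_val_orderEmb {p n : ℕ} (I : Fin p ↪o Fin n) (t : Fin p) :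
    (t : ℕ) ≤ I t := by
  have := Finset.card_le_card_of_injOn (s := Finset.Iio t) (t := Finset.Iio (I t)) I
    (fun a ha => by simpa using ha) I.injective.injOn
  rwa [Fin.card_Iio, Fin.card_Iio] at this

section Eigenvectors

variable {n k : ℕ} {A U : Matrix (Fin n) (Fin n) ℝ} {lam : Fin n → ℝ}

theorem exists_sign_minors_of_prod_maximal (hA : IsStrictlyKPositive A k) (hU : Uᵀ * U = 1)
    (hAU : A = U * diagonal lam * Uᵀ) {p : ℕ} (hp : 1 ≤ p) (hpk : p ≤ k) (S : Fin p ↪o Fin n)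
    (hS : ∀ I : Fin p ↪o Fin n, |∏ t, lam (I t)| ≤ |∏ t, lam (S t)|) :
    ∃ ε : ℝ, ε ≠ 0 ∧ ∀ I : Fin p ↪o Fin n, 0 < ε * (U.submatrix I S).det := by
  classical
  refine exists_sign_of_orthogonal_diagonalization (B := compoundMatrix p A)
    (Q := compoundMatrix p U) (d := fun I => ∏ t, lam (I t))
    (fun I J => hA p hp hpk I J I.strictMono J.strictMono) ?_ ?_ hS
  · rw [← compoundMatrix_transpose, ← compoundMatrix_mul, hU, compoundMatrix_one]
  · rw [hAU, compoundMatrix_mul, compoundMatrix_mul, compoundMatrix_diagonal,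
      compoundMatrix_transpose]

theorem abs_prod_le_abs_prod_castLE (hord : ∀ i j : Fin n, i ≤ j → |lam j| ≤ |lam i|) {p : ℕ}
    (hpn : p ≤ n) (I : Fin p ↪o Fin n) :
    |∏ t, lam (I t)| ≤ |∏ t, lam (Fin.castLEOrderEmb hpn t)| := by
  rw [Finset.abs_prod, Finset.abs_prod]
  exact Finset.prod_le_prod (fun _ _ => abs_nonneg _) fun t _ =>
    hord _ _ (Fin.val_le_val_orderEmb I t)

theorem exists_sign_leading_minors (hA : IsStrictlyKPositive A k) (hU : Uᵀ * U = 1)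
    (hAU : A = U * diagonal lam * Uᵀ) (hord : ∀ i j : Fin n, i ≤ j → |lam j| ≤ |lam i|)
    {p : ℕ} (hp : 1 ≤ p) (hpk : p ≤ k) (hpn : p ≤ n) :
    ∃ ε : ℝ, ∀ I : Fin p ↪o Fin n, 0 < ε * (U.submatrix I (Fin.castLEOrderEmb hpn)).det := by
  obtain ⟨ε, -, h⟩ := exists_sign_minors_of_prod_maximal hA hU hAU hp hpk
    (Fin.castLEOrderEmb hpn) (abs_prod_le_abs_prod_castLE hord hpn)
  exact ⟨ε, h⟩

theorem abs_eigenvalue_ne (hA : IsStrictlyKPositive A k) (hU : Uᵀ * U = 1)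
    (hAU : A = U * diagonal lam * Uᵀ) (hord : ∀ i j : Fin n, i ≤ j → |lam j| ≤ |lam i|)
    {i i' : Fin n} (hii' : i < i') (hik : (i : ℕ) < k) : |lam i| ≠ |lam i'| := by
  classical
  intro heq
  have hpn : (i : ℕ) + 1 ≤ n := i.isLt
  set S : Fin ((i : ℕ) + 1) ↪o Fin n := Fin.castLEOrderEmb hpn with hS
  let g : Fin ((i : ℕ) + 1) → Fin n := fun t => if t = Fin.last _ then i' else Fin.castLE hpn t
  have hg : StrictMono g := by
    intro a b hab
    have ha : a ≠ Fin.last _ := (hab.trans_le (Fin.le_last b)).ne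
    by_cases hb : b = Fin.last _
    · simp only [g, ha, hb, if_true, if_false]
      refine lt_trans ?_ hii'
      rw [Fin.lt_def] at hab ⊢
      simp only [Fin.val_castLE]
      omega
    · simp only [g, ha, hb, if_false]
      exact hab
  set S' : Fin ((i : ℕ) + 1) ↪o Fin n := OrderEmbedding.ofStrictMono g hg with hS'
  have hprod : |∏ t, lam (S' t)| = |∏ t, lam (S t)| := by
    rw [Finset.abs_prod, Finset.abs_prod]
    refine Finset.prod_congr rfl fun t _ => ?_
    by_cases ht : t = Fin.last _
    · simp only [hS', hS, OrderEmbedding.coe_ofStrictMono, g, ht, if_true]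
      exact heq.symm
    · simp only [hS', hS, OrderEmbedding.coe_ofStrictMono, g, ht, if_false]
      rfl
  have hmax := abs_prod_le_abs_prod_castLE hord hpn
  obtain ⟨ε, hε, h⟩ := exists_sign_minors_of_prod_maximal hA hU hAU (by omega) hik S hmax
  obtain ⟨ε', hε', h'⟩ := exists_sign_minors_of_prod_maximal hA hU hAU (by omega) hik S'
    fun I => (hmax I).trans hprod.ge
  have hne : S ≠ S' := by
    intro hSS
    have := DFunLike.congr_fun hSS (Fin.last _)
    simp only [hS', hS, OrderEmbedding.coe_ofStrictMono, g, if_true] at this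
    exact hii'.ne this
  have horth : ∑ I : Fin ((i : ℕ) + 1) ↪o Fin n,
      (U.submatrix I S).det * (U.submatrix I S').det = 0 := by
    have h1 : (compoundMatrix ((i : ℕ) + 1) U)ᵀ * compoundMatrix ((i : ℕ) + 1) U = 1 := by
      rw [← compoundMatrix_transpose, ← compoundMatrix_mul, hU, compoundMatrix_one]
    have h2 := congrFun (congrFun h1 S) S'
    rwa [one_apply_ne hne] at h2
  have hpos : 0 < ∑ I : Fin ((i : ℕ) + 1) ↪o Fin n,
      (ε * (U.submatrix I S).det) * (ε' * (U.submatrix I S').det) :=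
    Finset.sum_pos (fun I _ => mul_pos (h I) (h' I)) ⟨S, Finset.mem_univ _⟩
  have : ∑ I : Fin ((i : ℕ) + 1) ↪o Fin n,
      (ε * (U.submatrix I S).det) * (ε' * (U.submatrix I S').det) = 0 := by
    calc _ = (ε * ε') * ∑ I : Fin ((i : ℕ) + 1) ↪o Fin n,
          (U.submatrix I S).det * (U.submatrix I S').det := by
          rw [Finset.mul_sum]
          exact Finset.sum_congr rfl fun I _ => by ring
      _ = 0 := by rw [horth, mul_zero]
  exact hpos.ne' this

end Eigenvectors

/-- For a symmetric strictly `k`-positive matrix with eigenvalues ordered by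
decreasing modulus, any eigenvector `u` belonging to the `j`-th eigenvalue
(with `j < k`, zero-based, i.e. the `(j+1)`-st eigenvalue) has exactly `j`
sign changes: `S⁻(u) = S⁺(u) = j`. -/
theorem symm_strictly_kpositive_eigenvector_sign_changes
    {n k : ℕ} (hk1 : 1 ≤ k) (hkn : k ≤ n)
    (A : Matrix (Fin n) (Fin n) ℝ) (hsymm : A.IsSymm)
    (hA : IsStrictlyKPositive A k)
    (lam : Fin n → ℝ)
    (hspec : A.charpoly = ∏ i, (X - C (lam i)))
    (hord : ∀ i j : Fin n, i ≤ j → |lam j| ≤ |lam i|)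
    (j : Fin n) (hj : (j : ℕ) < k)
    (u : Fin n → ℝ) (hu : u ≠ 0) (heig : A.mulVec u = lam j • u) :
    Sminus u = (j : ℕ) ∧ Splus u = (j : ℕ) := by
  obtain ⟨U, hU, hAU⟩ := exists_orthogonal_diagonalization hsymm hspec
  have hU' : U * Uᵀ = 1 := mul_eq_one_comm.mp hU
  have : NeZero n := ⟨by omega⟩
  set a : Fin n → ℝ := Uᵀ *ᵥ u with ha
  have hua : u = U *ᵥ a := by rw [ha, mulVec_mulVec, hU', one_mulVec]
  have hdist : ∀ s, s ≠ j → lam s ≠ lam j := by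
    intro s hs h
    rcases lt_or_gt_of_ne hs with h' | h'
    · exact abs_eigenvalue_ne hA hU hAU hord h' (by omega) (by rw [h])
    · exact abs_eigenvalue_ne hA hU hAU hord h' (by omega) (by rw [h])
  have ha0 : ∀ s, s ≠ j → a s = 0 := by
    intro s hs
    have h1 : Uᵀ *ᵥ (A *ᵥ u) = diagonal lam *ᵥ a := by
      rw [hAU, mulVec_mulVec, ← Matrix.mul_assoc, ← Matrix.mul_assoc, hU, Matrix.one_mul,
        ← mulVec_mulVec]
    rw [heig, mulVec_smul] at h1
    have h2 := congrFun h1 s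
    rw [mulVec_diagonal, Pi.smul_apply, smul_eq_mul] at h2
    exact (mul_eq_zero.mp (show (lam s - lam j) * a s = 0 by rw [sub_mul, ← h2]; simp [ha])
      ).resolve_left (sub_ne_zero.mpr (hdist s hs))
  have hVc : (U.submatrix id (Fin.castLEOrderEmb (show (j : ℕ) + 1 ≤ n by omega))) *ᵥ
      Pi.single (Fin.last j) (a j) = u := by
    rw [hua]
    ext i
    rw [mulVec_single]
    simp only [mulVec, dotProduct]
    rw [Finset.sum_eq_single j (fun s _ hs => by rw [ha0 s hs, mul_zero])
      (fun h => absurd (Finset.mem_univ _) h)]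
    rfl
  have hupper : Splus u ≤ j := by
    obtain ⟨ε, hε⟩ := exists_sign_leading_minors hA hU hAU hord (p := j + 1) (by omega)
      (by omega) (by omega)
    rw [← hVc]
    refine Splus_le_of_minors (ε := ε) (fun I => ?_) (by rwa [hVc])
    exact hε I
  have hlower : (j : ℕ) ≤ Sminus u := by
    by_contra! hlt
    obtain ⟨ε, hε⟩ := exists_sign_leading_minors hA hU hAU hord (p := Sminus u + 1) (by omega)
      (by omega) (by omega)
    refine Sminus_ne_of_minors (V := U.submatrix id
      (Fin.castLEOrderEmb (show Sminus u + 1 ≤ n by omega))) (ε := ε) (fun I => hε I) hu ?_ rfl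
    ext s
    have h := ha0 (Fin.castLE (by omega) s) (fun h => by
      have := congrArg Fin.val h
      simp at this
      omega)
    rw [ha, mulVec_transpose] at h
    exact h
  have := Sminus_le_Splus u
  omega
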